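/- arXiv:2401.10343 — 3 statements merged into one kernel-verified Lean document; each statement's English description precedes it below -/
import Mathlib

section
/- For every real t > 0 it holds that 2 sinh(t/2) tanh(t/2)/t² ≥ 0.42. -/
/-! With `c = cosh x` one has `sinh x * tanh x = c - c⁻¹`, which is increasing in `c`. So `cosh x`
may be replaced by its Taylor polynomial `p = 1 + y / 2 + y ^ 2 / 24` in `y = x ^ 2`, and
`p - p⁻¹ ≥ 0.84 * y` reduces to the nonnegativity of a cubic on `y ≥ 0`. The factor `0.84` is
`2 * 0.42`, from the substitution `t = 2 * x`. -/

open Finset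
open scoped Nat

theorem sum_range_le_cosh (n : ℕ) (x : ℝ) :
    ∑ i ∈ range n, x ^ (2 * i) / (2 * i)! ≤ Real.cosh x :=
  sum_le_hasSum _ (fun i _ => div_nonneg ((even_two_mul i).pow_nonneg x) (by positivity))
    (Real.hasSum_cosh x)

theorem one_add_sq_add_pow_four_le_cosh (x : ℝ) :
    1 + x ^ 2 / 2 + x ^ 4 / 24 ≤ Real.cosh x := by
  simpa [sum_range_succ, Nat.factorial] using sum_range_le_cosh 3 x

theorem sinh_mul_tanh (x : ℝ) : Real.sinh x * Real.tanh x = Real.cosh x - (Real.cosh x)⁻¹ := by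
  have hc : Real.cosh x ≠ 0 := (Real.cosh_pos x).ne'
  rw [Real.tanh_eq_sinh_div_cosh]
  field_simp
  exact Real.sinh_sq x

theorem mul_le_sub_inv_quadratic {y : ℝ} (hy : 0 ≤ y) :
    0.84 * y ≤ 1 + y / 2 + y ^ 2 / 24 - (1 + y / 2 + y ^ 2 / 24)⁻¹ := by
  set p := 1 + y / 2 + y ^ 2 / 24 with hp
  have hp_pos : 0 < p := by positivity
  -- The cubic factor has its minimum over `y ≥ 0` near `y = 3`, hence the expansion there.
  have h_factor : p ^ 2 - 1 - 0.84 * y * p =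
      y / 576 * ((y - 3) ^ 2 * (y + 9.84) + 0.12 * y + 3.6) := by
    rw [hp]
    ring
  have h_nonneg : 0 ≤ p ^ 2 - 1 - 0.84 * y * p := by
    rw [h_factor]
    positivity
  calc
    0.84 * y = 0.84 * y * p / p := (mul_div_cancel_right₀ _ hp_pos.ne').symm
    _ ≤ (p ^ 2 - 1) / p := by gcongr; linarith
    _ = p - p⁻¹ := by field_simp

theorem mul_sq_le_sinh_mul_tanh (x : ℝ) : 0.84 * x ^ 2 ≤ Real.sinh x * Real.tanh x := by
  have h_taylor : 1 + x ^ 2 / 2 + (x ^ 2) ^ 2 / 24 ≤ Real.cosh x := by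
    simpa only [← pow_mul] using one_add_sq_add_pow_four_le_cosh x
  calc
    0.84 * x ^ 2 ≤ 1 + x ^ 2 / 2 + (x ^ 2) ^ 2 / 24 - (1 + x ^ 2 / 2 + (x ^ 2) ^ 2 / 24)⁻¹ :=
      mul_le_sub_inv_quadratic (sq_nonneg x)
    _ ≤ Real.cosh x - (Real.cosh x)⁻¹ := by gcongr
    _ = Real.sinh x * Real.tanh x := (sinh_mul_tanh x).symm

theorem two_sinh_tanh_div_sq_ge_general {t : ℝ} (ht : t ≠ 0) :
    0.42 ≤ 2 * Real.sinh (t / 2) * Real.tanh (t / 2) / t ^ 2 := by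
  rw [le_div_iff₀ (by positivity)]
  linarith [mul_sq_le_sinh_mul_tanh (t / 2)]

/-- For every real `t > 0`, `2 sinh(t/2) tanh(t/2) / t² ≥ 0.42`. -/
theorem two_sinh_tanh_div_sq_ge :
    ∀ t : ℝ, 0 < t → 0.42 ≤ 2 * Real.sinh (t / 2) * Real.tanh (t / 2) / t ^ 2 :=
  fun _ ht => two_sinh_tanh_div_sq_ge_general ht.ne'
end

section
/- Let n ≥ 1 and μ ∈ ℝ. On the n-qubit space (ℂ²)^{⊗n}, let H_μ = μ Σ_{j=1}^n (σ_z^{(j)} + I), where σ_z^{(j)} acts as σ_z on the j-th factor and as the identity elsewhere, and let |Φ⟩ = (|0⟩^{⊗n} + |1⟩^{⊗n})/√2 be the n-qubit GHZ state. Then ⟨Φ| H_μ² |Φ⟩ − (⟨Φ| H_μ |Φ⟩)² = μ² n². -/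
open Matrix

/-!
The GHZ state is an equal superposition of the two orthonormal eigenvectors `|1…1⟩` and `|0…0⟩`
of `H_μ`, with eigenvalues `2 μ n` and `0`. In a superposition `c v + d w` of orthonormal
eigenvectors a measurement behaves like a two-point random variable, taking the values `a` and `b`
with probabilities `|c|²` and `|d|²`, so its variance is `|c|² |d|² (a - b)²`.
-/

section Superposition

variable {m R : Type*} [Fintype m]

theorem star_dotProduct_mulVec_superposition [CommSemiring R] [StarRing R] {A : Matrix m m R}
    {v w : m → R} {a b : R} (hv : star v ⬝ᵥ v = 1) (hw : star w ⬝ᵥ w = 1)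
    (hvw : star v ⬝ᵥ w = 0) (hAv : A *ᵥ v = a • v) (hAw : A *ᵥ w = b • w) (c d : R) :
    star (c • v + d • w) ⬝ᵥ A *ᵥ (c • v + d • w) = star c * c * a + star d * d * b := by
  have hwv : star w ⬝ᵥ v = 0 := by rw [star_dotProduct, hvw, star_zero]
  simp only [mulVec_add, mulVec_smul, hAv, hAw, star_add, star_smul, add_dotProduct,
    dotProduct_add, smul_dotProduct, dotProduct_smul, hv, hw, hvw, hwv, smul_eq_mul]
  ring

variable [DecidableEq m]

theorem pow_mulVec_of_mulVec_eq_smul [CommSemiring R] {A : Matrix m m R} {v : m → R} {a : R}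
    (h : A *ᵥ v = a • v) (k : ℕ) : (A ^ k) *ᵥ v = a ^ k • v := by
  induction k with
  | zero => rw [pow_zero, pow_zero, one_mulVec, one_smul]
  | succ k ih => rw [pow_succ, ← mulVec_mulVec, h, mulVec_smul, ih, smul_smul, ← pow_succ']

/-- The variance `⟨ψ|A²|ψ⟩ - ⟨ψ|A|ψ⟩²` of the observable `A` in the state `ψ`. It is an
element of `R`, not a real number; `ψ` is meant to be a unit vector and is not rescaled. -/
def quantumVariance [CommRing R] [StarRing R] (A : Matrix m m R) (ψ : m → R) : R :=
  star ψ ⬝ᵥ (A ^ 2) *ᵥ ψ - (star ψ ⬝ᵥ A *ᵥ ψ) ^ 2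

theorem quantumVariance_superposition [CommRing R] [StarRing R] {A : Matrix m m R}
    {v w : m → R} {a b c d : R} (hv : star v ⬝ᵥ v = 1) (hw : star w ⬝ᵥ w = 1)
    (hvw : star v ⬝ᵥ w = 0) (hAv : A *ᵥ v = a • v) (hAw : A *ᵥ w = b • w)
    (hcd : star c * c + star d * d = 1) :
    quantumVariance A (c • v + d • w) = star c * c * (star d * d) * (a - b) ^ 2 := by
  rw [quantumVariance,
    star_dotProduct_mulVec_superposition hv hw hvw (pow_mulVec_of_mulVec_eq_smul hAv 2)
      (pow_mulVec_of_mulVec_eq_smul hAw 2),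
    star_dotProduct_mulVec_superposition hv hw hvw hAv hAw]
  linear_combination -(star c * c * a ^ 2 + star d * d * b ^ 2) * hcd

end Superposition

theorem ite_eq_or_eq_eq_smul_single_add_smul_single {m R : Type*} [DecidableEq m]
    [NonAssocSemiring R] {s t : m} (hst : s ≠ t) (c : R) :
    (fun r => if r = s ∨ r = t then c else 0) =
      c • (Pi.single s 1 : m → R) + c • (Pi.single t 1 : m → R) := by
  ext r
  rcases eq_or_ne r s with rfl | hr
  · simp [hst]
  · simp [Pi.single_apply, hr]

section LocalField

variable {ι R : Type*} [Fintype ι]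

/-- The Pauli operator `σ_z` acting on the `j`-th qubit of a register indexed by `ι`. It is diagonal
in the computational basis `ι → Bool`, with `true` standing for the `+1` eigenvector `|1⟩`. -/
def pauliZ [Ring R] (j : ι) : Matrix (ι → Bool) (ι → Bool) R :=
  diagonal fun s => if s j then 1 else -1

theorem pauliZ_add_one_mulVec_single [DecidableEq ι] [Ring R] (j : ι) (s : ι → Bool) :
    (pauliZ j + 1 : Matrix (ι → Bool) (ι → Bool) R) *ᵥ Pi.single s 1 =
      (if s j then (2 : R) else 0) • Pi.single s 1 := by
  rw [pauliZ, add_mulVec, one_mulVec, diagonal_mulVec_single, mul_one,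
    ← Pi.single_add, ← Pi.single_smul', smul_eq_mul, mul_one]
  cases s j <;> norm_num

/-- The Hamiltonian `H_μ = μ ∑ⱼ (σ_z^{(j)} + 1)` of a uniform field on the qubits, whose
spectrum is shifted so that `|0…0⟩` has energy `0`. -/
def localField [Ring R] (μ : R) : Matrix (ι → Bool) (ι → Bool) R :=
  μ • ∑ j, (pauliZ j + 1)

theorem localField_mulVec_single [DecidableEq ι] [Ring R] (μ : R) (s : ι → Bool) :
    localField μ *ᵥ Pi.single s 1 = (μ * (2 * Finset.card {j | s j})) • Pi.single s 1 := by
  rw [localField, smul_mulVec, sum_mulVec,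
    Finset.sum_congr rfl fun j _ => pauliZ_add_one_mulVec_single j s, ← Finset.sum_smul,
    smul_smul, ← Finset.sum_filter, Finset.sum_const, nsmul_eq_mul, Nat.cast_comm]

theorem quantumVariance_localField_superposition [DecidableEq ι] [CommRing R] [StarRing R] (μ : R)
    {s t : ι → Bool} (hst : s ≠ t) {c d : R} (hcd : star c * c + star d * d = 1) :
    quantumVariance (localField μ) (c • Pi.single s 1 + d • Pi.single t 1) =
      star c * c * (star d * d) *
        (2 * μ * ((Finset.card {j | s j} : R) - Finset.card {j | t j})) ^ 2 := by
  have norm_single (r : ι → Bool) : star (Pi.single r 1) ⬝ᵥ (Pi.single r 1 : _ → R) = 1 := by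
    simp
  have orthogonal : star (Pi.single s 1) ⬝ᵥ (Pi.single t 1 : _ → R) = 0 := by
    simp [hst]
  rw [quantumVariance_superposition (norm_single s) (norm_single t) orthogonal
    (localField_mulVec_single μ s) (localField_mulVec_single μ t) hcd]
  ring

end LocalField

theorem star_inv_sqrt_two_mul_self :
    star (((√2)⁻¹ : ℝ) : ℂ) * ((√2)⁻¹ : ℝ) = 2⁻¹ := by
  rw [Complex.star_def, Complex.conj_ofReal, ← Complex.ofReal_mul, ← mul_inv,
    Real.mul_self_sqrt zero_le_two, Complex.ofReal_inv, Complex.ofReal_ofNat]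

/-- For `H_μ = μ Σ_j (σ_z^{(j)} + I)` on `n` qubits and the GHZ state
`|Φ⟩ = (|1…1⟩ + |0…0⟩)/√2`, the variance of `H_μ` in `|Φ⟩` is `μ² n²`.
The `n`-qubit space is modeled as functions on the computational-basis configurations
`Fin n → Bool`, where the configuration value `true` at site `j` denotes the qubit state `|1⟩`
(with `σ_z |1⟩ = |1⟩`) and `false` denotes `|0⟩` (with `σ_z |0⟩ = -|0⟩`). -/
theorem ghz_variance_of_local_field
    (n : ℕ) (hn : 1 ≤ n) (μ : ℝ)
    (σzLoc : Fin n → Matrix (Fin n → Bool) (Fin n → Bool) ℂ)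
    (hσz : ∀ j, σzLoc j = Matrix.diagonal (fun s => if s j then (1 : ℂ) else -1))
    (Hμ : Matrix (Fin n → Bool) (Fin n → Bool) ℂ)
    (hHμ : Hμ = (μ : ℂ) • ∑ j, (σzLoc j + 1))
    (Φ : (Fin n → Bool) → ℂ)
    (hΦ : Φ = fun s => if s = (fun _ => true) ∨ s = (fun _ => false)
      then (((Real.sqrt 2)⁻¹ : ℝ) : ℂ) else 0) :
    star Φ ⬝ᵥ (Hμ ^ 2).mulVec Φ - (star Φ ⬝ᵥ Hμ.mulVec Φ) ^ 2 =
      ((μ ^ 2 * (n : ℝ) ^ 2 : ℝ) : ℂ) := by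
  have configs_ne : (fun _ : Fin n => true) ≠ (fun _ => false) :=
    fun h => Bool.noConfusion (congrFun h ⟨0, hn⟩)
  have weights_add : star (((√2)⁻¹ : ℝ) : ℂ) * ((√2)⁻¹ : ℝ) +
      star (((√2)⁻¹ : ℝ) : ℂ) * ((√2)⁻¹ : ℝ) = 1 := by
    rw [star_inv_sqrt_two_mul_self]
    norm_num
  obtain rfl : σzLoc = pauliZ := funext hσz
  rw [ite_eq_or_eq_eq_smul_single_add_smul_single configs_ne] at hΦ
  subst hHμ hΦ
  calc
    quantumVariance (localField (μ : ℂ)) _ = 2⁻¹ * 2⁻¹ * (2 * μ * (n - 0)) ^ 2 := by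
      rw [quantumVariance_localField_superposition _ configs_ne weights_add,
        star_inv_sqrt_two_mul_self]
      simp
    _ = ((μ ^ 2 * (n : ℝ) ^ 2 : ℝ) : ℂ) := by
      push_cast
      ring
end

section
/- Let n ≥ 1 and μ, λ > 0. On the n-qubit space (ℂ²)^{⊗n}, let |gs⟩ be the unit vector proportional to λ·|1⟩^{⊗n} + (μ + √(μ² + λ²))·|0⟩^{⊗n} (the ground state of H̃ = μ Σ_j σ_z^{(j)} − λn·⊗_j σ_x), and let A = Σ_{j=1}^n σ_z^{(j)}. Then the variance of A in this state satisfies ⟨gs| A² |gs⟩ − (⟨gs| A |gs⟩)² = n² λ²/(μ² + λ²). -/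
/-!
The observable `A` is diagonal in the computational basis and the ground state is supported on the
two configurations `|1…1⟩` and `|0…0⟩`, where `A` takes the values `n` and `-n`. So `A` behaves as a
two-point random variable with weights `p + q = 1` and has variance `4 n² p q`. Writing
`r = √(μ² + λ²)`, the amplitudes `λ` and `b = μ + r` satisfy `λ² + b² = 2 r b`, whence
`4 p q = 4 λ² b² / (2 r b)² = λ² / r²`.
-/

open Matrix

section DiagonalObservable

variable {m R : Type*} [Fintype m]

/-- The expectation value `⟨ψ| A |ψ⟩` of an observable `A`, without normalizing `ψ`. -/
def expectation [NonUnitalNonAssocSemiring R] [Star R] (A : Matrix m m R) (ψ : m → R) : R :=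
  star ψ ⬝ᵥ A *ᵥ ψ

variable [DecidableEq m]

/-- The variance `⟨ψ| A² |ψ⟩ - ⟨ψ| A |ψ⟩²` of an observable `A` in a state `ψ`, which is meant to be
a unit vector. -/
def stateVariance [Ring R] [Star R] (A : Matrix m m R) (ψ : m → R) : R :=
  expectation (A ^ 2) ψ - expectation A ψ ^ 2

theorem expectation_one [NonAssocSemiring R] [Star R] (ψ : m → R) :
    expectation 1 ψ = star ψ ⬝ᵥ ψ := by
  rw [expectation, one_mulVec]

theorem expectation_diagonal_single_add_single [CommSemiring R] [StarRing R] {i j : m}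
    (hij : i ≠ j) (f : m → R) (a b : R) :
    expectation (diagonal f) (Pi.single i a + Pi.single j b) =
      star a * a * f i + star b * b * f j := by
  rw [expectation, dotProduct, Fintype.sum_eq_add i j hij]
  · simp only [mulVec_diagonal, Pi.star_apply, Pi.add_apply, Pi.single_eq_same,
      Pi.single_eq_of_ne hij, Pi.single_eq_of_ne hij.symm, add_zero, zero_add]
    ring
  · rintro s ⟨hi, hj⟩
    simp [hi, hj]

theorem star_dotProduct_single_add_single [CommSemiring R] [StarRing R] {i j : m}
    (hij : i ≠ j) (a b : R) :
    star (Pi.single i a + Pi.single j b) ⬝ᵥ (Pi.single i a + Pi.single j b) =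
      star a * a + star b * b := by
  rw [← expectation_one, ← diagonal_one, expectation_diagonal_single_add_single hij, mul_one,
    mul_one]

theorem stateVariance_diagonal_single_add_single [CommRing R] [StarRing R] {i j : m}
    (hij : i ≠ j) (f : m → R) {a b : R} (hab : star a * a + star b * b = 1) :
    stateVariance (diagonal f) (Pi.single i a + Pi.single j b) =
      star a * a * (star b * b) * (f i - f j) ^ 2 := by
  simp only [stateVariance, diagonal_pow, expectation_diagonal_single_add_single hij, Pi.pow_apply]
  linear_combination (-(star a * a * f i ^ 2) - star b * b * f j ^ 2) * hab

end DiagonalObservable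

section Qubits

variable {ι R K : Type*}

/-- The Pauli operator `σ_z` acting on qubit `j`, as a matrix in the computational basis `ι → Bool`,
where `true` stands for `|1⟩` (eigenvalue `1`) and `false` for `|0⟩` (eigenvalue `-1`). -/
def sigmaZ [Fintype ι] [Ring R] (j : ι) : Matrix (ι → Bool) (ι → Bool) R :=
  diagonal fun s => if s j then 1 else -1

variable (ι R) in
/-- The observable `∑ j, σ_z^{(j)}`, summed over all qubits `j : ι`. -/
def totalSigmaZ [Fintype ι] [Ring R] : Matrix (ι → Bool) (ι → Bool) R :=
  ∑ j, sigmaZ j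

variable (ι) in
/-- The unnormalized superposition `a |1…1⟩ + b |0…0⟩`, as in a Greenberger–Horne–Zeilinger state.
For empty `ι` the two configurations coincide and the amplitudes add up. -/
def ghzVector [Fintype ι] [AddZeroClass R] (a b : R) : (ι → Bool) → R :=
  Pi.single (fun _ => true) a + Pi.single (fun _ => false) b

theorem const_true_ne_const_false [Nonempty ι] :
    (fun _ => true : ι → Bool) ≠ fun _ => false :=
  Function.const_injective.ne (by decide)

variable [Fintype ι]

theorem totalSigmaZ_eq_diagonal [Ring R] :
    totalSigmaZ ι R = diagonal fun s => ∑ j, if s j then 1 else -1 := by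
  have hsum := map_sum (diagonalAddMonoidHom (ι → Bool) R)
    (fun j s => if s j then (1 : R) else -1) Finset.univ
  rw [Finset.sum_fn] at hsum
  exact hsum.symm

theorem ghzVector_eq_ite [Nonempty ι] [AddZeroClass R] (a b : R) :
    ghzVector ι a b = fun s =>
      if s = fun _ => true then a else if s = fun _ => false then b else 0 := by
  funext s
  rw [ghzVector, Pi.add_apply, Pi.single_apply, Pi.single_apply]
  by_cases hs : s = fun _ => true
  · simp only [hs, if_true, if_neg const_true_ne_const_false, add_zero]
  · simp only [hs, if_false, zero_add]

theorem smul_ghzVector {M : Type*} [Monoid M] [AddMonoid R] [DistribMulAction M R] (c : M)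
    (a b : R) : c • ghzVector ι a b = ghzVector ι (c • a) (c • b) := by
  rw [ghzVector, ghzVector, smul_add, Pi.single_smul', Pi.single_smul']

variable [DecidableEq ι]

theorem stateVariance_totalSigmaZ_ghzVector [Nonempty ι] [CommRing R] [StarRing R] {a b : R}
    (hab : star a * a + star b * b = 1) :
    stateVariance (totalSigmaZ ι R) (ghzVector ι a b) =
      4 * (Fintype.card ι : R) ^ 2 * (star a * a) * (star b * b) := by
  rw [totalSigmaZ_eq_diagonal, ghzVector,
    stateVariance_diagonal_single_add_single const_true_ne_const_false _ hab]
  simp only [if_true, Bool.false_eq_true, if_false, Finset.sum_const, Finset.card_univ,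
    nsmul_eq_mul]
  ring

theorem stateVariance_totalSigmaZ_smul_ghzVector [Field K] [StarRing K] {a b c : K}
    (hunit : star (c • ghzVector ι a b) ⬝ᵥ (c • ghzVector ι a b) = 1) :
    stateVariance (totalSigmaZ ι K) (c • ghzVector ι a b) =
      (Fintype.card ι : K) ^ 2 *
        (4 * (star a * a) * (star b * b) / (star a * a + star b * b) ^ 2) := by
  cases isEmpty_or_nonempty ι
  · simp [stateVariance, expectation, totalSigmaZ]
  rw [smul_ghzVector, smul_eq_mul, smul_eq_mul] at hunit ⊢
  rw [ghzVector, star_dotProduct_single_add_single const_true_ne_const_false] at hunit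
  have hnorm : star c * c * (star a * a + star b * b) = 1 := by
    rw [← hunit, star_mul', star_mul']
    ring
  have hweight : star c * c = (star a * a + star b * b)⁻¹ := eq_inv_of_mul_eq_one_left hnorm
  calc stateVariance (totalSigmaZ ι K) (ghzVector ι (c * a) (c * b))
      = 4 * (Fintype.card ι : K) ^ 2 * (star (c * a) * (c * a)) * (star (c * b) * (c * b)) :=
        stateVariance_totalSigmaZ_ghzVector hunit
    _ = (Fintype.card ι : K) ^ 2 * (4 * (star a * a) * (star b * b)) * (star c * c) ^ 2 := by
        rw [star_mul', star_mul']
        ring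
    _ = (Fintype.card ι : K) ^ 2 *
          (4 * (star a * a) * (star b * b) / (star a * a + star b * b) ^ 2) := by
        rw [hweight, inv_pow, mul_assoc, ← div_eq_mul_inv]

end Qubits

/-- The unnormalized amplitude `μ + √(μ² + λ²)` of `|0…0⟩` in the ground state of
`μ Σ_j σ_z^{(j)} - λn ⊗_j σ_x`, relative to the amplitude `λ` of `|1…1⟩`. -/
noncomputable def groundAmplitude (μ lam : ℝ) : ℝ :=
  μ + √(μ ^ 2 + lam ^ 2)

theorem groundAmplitude_pos (μ : ℝ) {lam : ℝ} (hlam : lam ≠ 0) : 0 < groundAmplitude μ lam := by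
  have hlt : |μ| < √(μ ^ 2 + lam ^ 2) :=
    Real.lt_sqrt_of_sq_lt (by rw [sq_abs]; exact lt_add_of_pos_right _ (by positivity))
  rw [groundAmplitude]
  linarith [neg_abs_le μ]

theorem sq_add_groundAmplitude_sq (μ lam : ℝ) :
    lam ^ 2 + groundAmplitude μ lam ^ 2 = 2 * √(μ ^ 2 + lam ^ 2) * groundAmplitude μ lam := by
  rw [groundAmplitude]
  linear_combination -Real.sq_sqrt (show 0 ≤ μ ^ 2 + lam ^ 2 by positivity)

theorem four_mul_sq_mul_groundAmplitude_sq_div (μ lam : ℝ) :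
    4 * lam ^ 2 * groundAmplitude μ lam ^ 2 / (lam ^ 2 + groundAmplitude μ lam ^ 2) ^ 2 =
      lam ^ 2 / (μ ^ 2 + lam ^ 2) := by
  rcases eq_or_ne lam 0 with rfl | hlam
  · simp
  have hb : 4 * groundAmplitude μ lam ^ 2 ≠ 0 := by
    have := groundAmplitude_pos μ hlam
    positivity
  calc 4 * lam ^ 2 * groundAmplitude μ lam ^ 2 / (lam ^ 2 + groundAmplitude μ lam ^ 2) ^ 2
      = 4 * groundAmplitude μ lam ^ 2 * lam ^ 2 /
          (4 * groundAmplitude μ lam ^ 2 * √(μ ^ 2 + lam ^ 2) ^ 2) := by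
        rw [sq_add_groundAmplitude_sq]
        ring
    _ = lam ^ 2 / (μ ^ 2 + lam ^ 2) := by
        rw [mul_div_mul_left _ _ hb, Real.sq_sqrt (by positivity)]

theorem ground_state_variance_of_total_sigma_z_general {ι : Type*} [Fintype ι] [DecidableEq ι]
    (μ lam : ℝ) (ψ : (ι → Bool) → ℂ) (c : ℂ)
    (hψ : ψ = c • ghzVector ι (lam : ℂ) (groundAmplitude μ lam : ℂ))
    (hunit : star ψ ⬝ᵥ ψ = 1) :
    stateVariance (totalSigmaZ ι ℂ) ψ =
      (((Fintype.card ι : ℝ) ^ 2 * lam ^ 2 / (μ ^ 2 + lam ^ 2) : ℝ) : ℂ) := by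
  subst hψ
  rw [stateVariance_totalSigmaZ_smul_ghzVector hunit, mul_div_assoc ((Fintype.card ι : ℝ) ^ 2),
    ← four_mul_sq_mul_groundAmplitude_sq_div]
  simp only [Complex.star_def, Complex.conj_ofReal, ← sq]
  push_cast
  rfl

/-- For any unit vector `ψ` proportional to the ground state
`λ |1…1⟩ + (μ + √(μ² + λ²)) |0…0⟩` of `H̃ = μ Σ_j σ_z^{(j)} - λn ⊗_j σ_x`, the variance of
`A = Σ_j σ_z^{(j)}` in `ψ` is `n² λ²/(μ² + λ²)`.
The `n`-qubit space is modeled as functions on the computational-basis configurations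
`Fin n → Bool`, where `true` at site `j` denotes `|1⟩` (`σ_z |1⟩ = |1⟩`) and `false` denotes
`|0⟩`. -/
theorem ground_state_variance_of_total_sigma_z
    (n : ℕ) (hn : 1 ≤ n) (μ lam : ℝ) (hμ : 0 < μ) (hlam : 0 < lam)
    (σzLoc : Fin n → Matrix (Fin n → Bool) (Fin n → Bool) ℂ)
    (hσz : ∀ j, σzLoc j = Matrix.diagonal (fun s => if s j then (1 : ℂ) else -1))
    (A : Matrix (Fin n → Bool) (Fin n → Bool) ℂ) (hA : A = ∑ j, σzLoc j)
    (g : (Fin n → Bool) → ℂ)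
    (hg : g = fun s => if s = (fun _ => true) then ((lam : ℝ) : ℂ)
      else if s = (fun _ => false) then ((μ + Real.sqrt (μ ^ 2 + lam ^ 2) : ℝ) : ℂ) else 0)
    (ψ : (Fin n → Bool) → ℂ) (c : ℂ) (hψ : ψ = c • g) (hunit : star ψ ⬝ᵥ ψ = 1) :
    star ψ ⬝ᵥ (A ^ 2).mulVec ψ - (star ψ ⬝ᵥ A.mulVec ψ) ^ 2 =
      (((n : ℝ) ^ 2 * lam ^ 2 / (μ ^ 2 + lam ^ 2) : ℝ) : ℂ) := by
  have : Nonempty (Fin n) := ⟨⟨0, hn⟩⟩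
  obtain rfl : σzLoc = sigmaZ := funext hσz
  rw [← ghzVector_eq_ite] at hg
  subst hA hg
  have hvar := ground_state_variance_of_total_sigma_z_general μ lam ψ c hψ hunit
  rw [Fintype.card_fin] at hvar
  exact hvar
end
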